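/- arXiv:1606.03730 — 2 statements merged into one kernel-verified Lean document; each statement's English description precedes it below -/
import Mathlib

section
/- If two nonnegative random variables X and Y have Mellin transforms that are finite and equal on some nonempty open interval (α, β) ⊂ ℝ, then X and Y have the same distribution. -/
open MeasureTheory Set Filter

open ProbabilityTheory Topology

/-- Finite measures for which the moment generating functions of `X` and `Y` are finite and agree
near `0` give `X` and `Y` the same law. -/
theorem map_eq_map_of_mgf_eventuallyEq {Ω Ω' : Type*} [MeasurableSpace Ω] [MeasurableSpace Ω']
    {μ : Measure Ω} {ν : Measure Ω'} [IsFiniteMeasure μ] [IsFiniteMeasure ν]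
    {X : Ω → ℝ} {Y : Ω' → ℝ} (hX : 0 ∈ interior (integrableExpSet X μ))
    (hY : 0 ∈ interior (integrableExpSet Y ν)) (h : mgf X μ =ᶠ[𝓝 0] mgf Y ν) :
    μ.map X = ν.map Y := by
  have hXm := aemeasurable_of_mem_interior_integrableExpSet hX
  have hYm := aemeasurable_of_mem_interior_integrableExpSet hY
  set S := interior (integrableExpSet X μ) ∩ interior (integrableExpSet Y ν)
  have hS : Convex ℝ S := convex_integrableExpSet.interior.inter convex_integrableExpSet.interior
  have hfreq : ∃ᶠ z in 𝓝[≠] (0 : ℂ), complexMGF X μ z = complexMGF Y ν z := by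
    have htend : Tendsto (fun x : ℝ ↦ (x : ℂ)) (𝓝[≠] 0) (𝓝[≠] 0) := by
      refine tendsto_nhdsWithin_iff.mpr ⟨?_, ?_⟩
      · exact (Complex.continuous_ofReal.tendsto' 0 0 (by simp)).mono_left nhdsWithin_le_nhds
      · filter_upwards [self_mem_nhdsWithin] with x hx
        simpa using hx
    refine htend.frequently (Eventually.frequently ?_)
    filter_upwards [h.filter_mono nhdsWithin_le_nhds] with x hx
    rw [complexMGF_ofReal, complexMGF_ofReal, hx]
  have heq : EqOn (complexMGF X μ) (complexMGF Y ν) {z | z.re ∈ S} :=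
    AnalyticOnNhd.eqOn_of_preconnected_of_frequently_eq
      (analyticOnNhd_complexMGF.mono fun z hz ↦ hz.1)
      (analyticOnNhd_complexMGF.mono fun z hz ↦ hz.2)
      (hS.linear_preimage Complex.reLm).isPreconnected
      (show (0 : ℂ).re ∈ S from ⟨by simpa using hX, by simpa using hY⟩) hfreq
  refine Measure.ext_of_charFun (funext fun t ↦ ?_)
  rw [← complexMGF_mul_I hXm, ← complexMGF_mul_I hYm]
  exact heq (show ((t : ℂ) * Complex.I).re ∈ S by simpa using ⟨hX, hY⟩)

/-- `μ` reweighted by the power function `x ↦ x ^ l`. -/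
noncomputable def rpowTilt (μ : Measure ℝ) (l : ℝ) : Measure ℝ :=
  μ.withDensity fun x ↦ ENNReal.ofReal (x ^ l)

section rpowTilt

variable {μ : Measure ℝ} {l : ℝ}

theorem measurable_ofReal_rpow (l : ℝ) : Measurable fun x : ℝ ↦ ENNReal.ofReal (x ^ l) := by
  fun_prop

theorem rpow_mul_exp_mul_log_ae_eq (hμ : ∀ᵐ x ∂μ, 0 < x) (t : ℝ) :
    (fun x : ℝ ↦ (ENNReal.ofReal (x ^ l)).toReal • Real.exp (t * Real.log x))
      =ᵐ[μ] fun x ↦ x ^ (l + t) := by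
  filter_upwards [hμ] with x hx
  rw [ENNReal.toReal_ofReal (by positivity), Real.rpow_add hx, smul_eq_mul,
    Real.rpow_def_of_pos hx t, mul_comm t]

theorem integrableExpSet_log_rpowTilt (hμ : ∀ᵐ x ∂μ, 0 < x) :
    integrableExpSet Real.log (rpowTilt μ l) = {t | Integrable (fun x ↦ x ^ (l + t)) μ} := by
  ext t
  simp only [integrableExpSet, mem_ofPred_eq, rpowTilt]
  rw [integrable_withDensity_iff_integrable_smul' (measurable_ofReal_rpow l) (by simp),
    integrable_congr (rpow_mul_exp_mul_log_ae_eq hμ t)]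

theorem mgf_log_rpowTilt (hμ : ∀ᵐ x ∂μ, 0 < x) (t : ℝ) :
    mgf Real.log (rpowTilt μ l) t = ∫ x, x ^ (l + t) ∂μ := by
  rw [mgf, rpowTilt,
    integral_withDensity_eq_integral_toReal_smul (measurable_ofReal_rpow l) (by simp),
    integral_congr_ae (rpow_mul_exp_mul_log_ae_eq hμ t)]

theorem withDensity_inv_rpowTilt (hμ : ∀ᵐ x ∂μ, 0 < x) :
    (rpowTilt μ l).withDensity (fun x ↦ (ENNReal.ofReal (x ^ l))⁻¹) = μ := by
  refine withDensity_inv_same (measurable_ofReal_rpow l) ?_ (by simp)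
  filter_upwards [hμ] with x hx
  simpa using Real.rpow_pos_of_pos hx l

theorem map_exp_map_log_rpowTilt (hμ : ∀ᵐ x ∂μ, 0 < x) :
    ((rpowTilt μ l).map Real.log).map Real.exp = rpowTilt μ l := by
  rw [Measure.map_map Real.measurable_exp Real.measurable_log]
  have h : Real.exp ∘ Real.log =ᵐ[rpowTilt μ l] id :=
    (withDensity_absolutelyContinuous μ _).ae_le (hμ.mono fun x hx ↦ Real.exp_log hx)
  rw [Measure.map_congr h, Measure.map_id]

end rpowTilt

theorem eq_of_integral_rpow_eq {μ ν : Measure ℝ} (hμ : ∀ᵐ x ∂μ, 0 < x) (hν : ∀ᵐ x ∂ν, 0 < x)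
    {α β : ℝ} (hαβ : α < β)
    (hintμ : ∀ l ∈ Ioo α β, Integrable (fun x ↦ x ^ l) μ)
    (hintν : ∀ l ∈ Ioo α β, Integrable (fun x ↦ x ^ l) ν)
    (heq : ∀ l ∈ Ioo α β, ∫ x, x ^ l ∂μ = ∫ x, x ^ l ∂ν) : μ = ν := by
  obtain ⟨l, hl⟩ := nonempty_Ioo.mpr hαβ
  have hnhds : ∀ᶠ t in 𝓝 (0 : ℝ), l + t ∈ Ioo α β :=
    ((continuous_const_add l).tendsto' 0 l (by simp)).eventually (isOpen_Ioo.mem_nhds hl)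
  have : IsFiniteMeasure (rpowTilt μ l) := isFiniteMeasure_withDensity_ofReal (hintμ l hl).2
  have : IsFiniteMeasure (rpowTilt ν l) := isFiniteMeasure_withDensity_ofReal (hintν l hl).2
  have hlog : (rpowTilt μ l).map Real.log = (rpowTilt ν l).map Real.log := by
    refine map_eq_map_of_mgf_eventuallyEq ?_ ?_ ?_
    · rw [integrableExpSet_log_rpowTilt hμ, mem_interior_iff_mem_nhds]
      exact hnhds.mono fun t ht ↦ hintμ _ ht
    · rw [integrableExpSet_log_rpowTilt hν, mem_interior_iff_mem_nhds]
      exact hnhds.mono fun t ht ↦ hintν _ ht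
    · filter_upwards [hnhds] with t ht
      rw [mgf_log_rpowTilt hμ, mgf_log_rpowTilt hν, heq _ ht]
  rw [← withDensity_inv_rpowTilt (l := l) hμ, ← map_exp_map_log_rpowTilt hμ, hlog,
    map_exp_map_log_rpowTilt hν, withDensity_inv_rpowTilt hν]

/-- Probability measures on `[0, ∞)` which agree on `(0, ∞)` are equal. -/
theorem eq_of_restrict_Ioi_eq {μ ν : Measure ℝ} [IsProbabilityMeasure μ] [IsProbabilityMeasure ν]
    (hμ : ∀ᵐ x ∂μ, 0 ≤ x) (hν : ∀ᵐ x ∂ν, 0 ≤ x)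
    (h : μ.restrict (Ioi 0) = ν.restrict (Ioi 0)) : μ = ν := by
  have hdirac (ρ : Measure ℝ) (hρ : ∀ᵐ x ∂ρ, 0 ≤ x) :
      ρ.restrict (Ioi 0)ᶜ = ρ (Ioi 0)ᶜ • Measure.dirac 0 := by
    have hae : ((Ioi 0)ᶜ : Set ℝ) =ᵐ[ρ] ({0} : Set ℝ) := by
      refine eventuallyEq_set.mpr ?_
      filter_upwards [hρ] with x hx
      simp [hx.ge_iff_eq']
    rw [Measure.restrict_congr_set hae, Measure.restrict_singleton, measure_congr hae]
  have hmass : μ (Ioi 0) = ν (Ioi 0) := by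
    simpa using congrArg (fun ρ : Measure ℝ ↦ ρ univ) h
  rw [← Measure.restrict_add_restrict_compl (μ := μ) (measurableSet_Ioi (a := (0 : ℝ))),
    ← Measure.restrict_add_restrict_compl (μ := ν) (measurableSet_Ioi (a := (0 : ℝ))), h,
    hdirac μ hμ, hdirac ν hν, prob_compl_eq_one_sub measurableSet_Ioi,
    prob_compl_eq_one_sub measurableSet_Ioi, hmass]

theorem setIntegral_Ioi_rpow_map {Ω : Type*} [MeasurableSpace Ω] {P : Measure Ω} {X : Ω → ℝ}
    (hX : Measurable X) (hXnn : ∀ ω, 0 ≤ X ω) {l : ℝ} (hl : l ≠ 0) :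
    ∫ x in Ioi 0, x ^ l ∂(P.map X) = ∫ ω, X ω ^ l ∂P := by
  rw [setIntegral_map measurableSet_Ioi (by fun_prop) hX.aemeasurable]
  refine setIntegral_eq_integral_of_forall_compl_eq_zero fun ω hω ↦ ?_
  rw [le_antisymm (not_lt.mp hω) (hXnn ω), Real.zero_rpow hl]

theorem integrableOn_Ioi_rpow_map {Ω : Type*} [MeasurableSpace Ω] {P : Measure Ω} {X : Ω → ℝ}
    (hX : Measurable X) {l : ℝ} (h : Integrable (fun ω ↦ X ω ^ l) P) :
    IntegrableOn (fun x ↦ x ^ l) (Ioi 0) (P.map X) :=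
  ((integrable_map_measure (g := fun x : ℝ ↦ x ^ l) (by fun_prop) hX.aemeasurable).mpr
    h).integrableOn

theorem exists_Ioo_subset_zero_notMem {α β : ℝ} (hαβ : α < β) :
    ∃ a b, a < b ∧ Ioo a b ⊆ Ioo α β ∧ 0 ∉ Ioo a b := by
  rcases lt_or_ge 0 β with hβ | hβ
  · exact ⟨max α 0, β, max_lt hαβ hβ, Ioo_subset_Ioo_left (le_max_left _ _),
      fun h ↦ (le_max_right α 0).not_gt h.1⟩
  · exact ⟨α, β, hαβ, subset_rfl, fun h ↦ hβ.not_gt h.2⟩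

/-- Injectivity of the Mellin transform: if the Mellin transforms of two nonnegative
random variables `X` and `Y` are finite and coincide on a nonempty open interval
`(α, β)`, then `X` and `Y` have the same distribution. -/
theorem mellin_injective {Ω₁ Ω₂ : Type*} [MeasurableSpace Ω₁] [MeasurableSpace Ω₂]
    (P : Measure Ω₁) (Q : Measure Ω₂) [IsProbabilityMeasure P] [IsProbabilityMeasure Q]
    (X : Ω₁ → ℝ) (Y : Ω₂ → ℝ) (hX : Measurable X) (hY : Measurable Y)
    (hXnn : ∀ ω, 0 ≤ X ω) (hYnn : ∀ ω, 0 ≤ Y ω)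
    {α β : ℝ} (hαβ : α < β)
    (hintX : ∀ l ∈ Ioo α β, Integrable (fun ω => X ω ^ l) P)
    (hintY : ∀ l ∈ Ioo α β, Integrable (fun ω => Y ω ^ l) Q)
    (heq : ∀ l ∈ Ioo α β, ∫ ω, X ω ^ l ∂P = ∫ ω, Y ω ^ l ∂Q) :
    P.map X = Q.map Y := by
  obtain ⟨a, b, hab, hsub, h0⟩ := exists_Ioo_subset_zero_notMem hαβ
  have : IsProbabilityMeasure (P.map X) := Measure.isProbabilityMeasure_map hX.aemeasurable
  have : IsProbabilityMeasure (Q.map Y) := Measure.isProbabilityMeasure_map hY.aemeasurable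
  refine eq_of_restrict_Ioi_eq
    ((ae_map_iff hX.aemeasurable measurableSet_Ici).mpr (ae_of_all _ hXnn))
    ((ae_map_iff hY.aemeasurable measurableSet_Ici).mpr (ae_of_all _ hYnn)) ?_
  refine eq_of_integral_rpow_eq (ae_restrict_mem measurableSet_Ioi)
    (ae_restrict_mem measurableSet_Ioi) hab
    (fun l hl ↦ integrableOn_Ioi_rpow_map hX (hintX l (hsub hl)))
    (fun l hl ↦ integrableOn_Ioi_rpow_map hY (hintY l (hsub hl))) fun l hl ↦ ?_
  have hl0 : l ≠ 0 := fun h ↦ h0 (h ▸ hl)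
  rw [setIntegral_Ioi_rpow_map hX hXnn hl0, setIntegral_Ioi_rpow_map hY hYnn hl0,
    heq l (hsub hl)]
end

section
/- If X and Y are independent nonnegative random variables and t ∈ D_X ∩ D_Y, then (XY)_{(t)} has the same distribution as X_{(t)} Y_{(t)} where X_{(t)} and Y_{(t)} are taken independent. -/
open MeasureTheory Set Filter

/-- The size-biased law of order `t` of a distribution `μ` on `ℝ`. -/
noncomputable def sizeBiased (μ : MeasureTheory.Measure ℝ) (t : ℝ) :
    MeasureTheory.Measure ℝ :=
  (∫⁻ x, ENNReal.ofReal (x ^ t) ∂μ)⁻¹ •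
    μ.withDensity fun x => ENNReal.ofReal (x ^ t)

/-- Pushing forward a measure whose density is pulled back along the map. -/
theorem map_withDensity_comp {α β : Type*} [MeasurableSpace α] [MeasurableSpace β]
    {μ : Measure α} {g : α → β} {f : β → ENNReal} (hg : Measurable g) (hf : Measurable f) :
    (μ.withDensity fun x => f (g x)).map g = (μ.map g).withDensity f := by
  ext s hs
  rw [Measure.map_apply hg hs, withDensity_apply _ (hg hs), withDensity_apply _ hs,
    setLIntegral_map hs hf hg]

/-- Almost surely, the weight of order `t` is multiplicative on pairs of nonnegative reals. -/
theorem ofReal_mul_rpow_ae_eq (μ ν : Measure ℝ) [SFinite μ] [SFinite ν]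
    (hμ : μ {x : ℝ | x < 0} = 0) (hν : ν {x : ℝ | x < 0} = 0) (t : ℝ) :
    (fun p : ℝ × ℝ => ENNReal.ofReal ((p.1 * p.2) ^ t)) =ᵐ[μ.prod ν]
      fun p => ENNReal.ofReal (p.1 ^ t) * ENNReal.ofReal (p.2 ^ t) := by
  have hx : ∀ᵐ x ∂μ, 0 ≤ x := by simpa [ae_iff] using hμ
  have hy : ∀ᵐ y ∂ν, 0 ≤ y := by simpa [ae_iff] using hν
  filter_upwards [Measure.quasiMeasurePreserving_fst.ae hx,
    Measure.quasiMeasurePreserving_snd.ae hy] with p h1 h2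
  rw [Real.mul_rpow h1 h2, ENNReal.ofReal_mul (Real.rpow_nonneg h1 t)]

/-- For independent nonnegative `X`, `Y` (with laws `μ`, `ν`) and `t` in both
Mellin domains, `(XY)_{(t)}` has the same law as the product of independent
copies of `X_{(t)}` and `Y_{(t)}`. -/
theorem sizeBiased_mul (μ ν : Measure ℝ) [IsProbabilityMeasure μ]
    [IsProbabilityMeasure ν]
    (hμsupp : μ {x : ℝ | x < 0} = 0) (hνsupp : ν {x : ℝ | x < 0} = 0)
    {t : ℝ} (ht : 0 ≤ t)
    (hμpos : 0 < ∫⁻ x, ENNReal.ofReal (x ^ t) ∂μ)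
    (hμfin : ∫⁻ x, ENNReal.ofReal (x ^ t) ∂μ < ⊤)
    (hνpos : 0 < ∫⁻ x, ENNReal.ofReal (x ^ t) ∂ν)
    (hνfin : ∫⁻ x, ENNReal.ofReal (x ^ t) ∂ν < ⊤) :
    sizeBiased ((μ.prod ν).map fun p => p.1 * p.2) t =
      ((sizeBiased μ t).prod (sizeBiased ν t)).map fun p => p.1 * p.2 := by
  have hf : Measurable fun x : ℝ => ENNReal.ofReal (x ^ t) := by fun_prop
  have hm : Measurable fun p : ℝ × ℝ => p.1 * p.2 := by fun_prop
  have hae := ofReal_mul_rpow_ae_eq μ ν hμsupp hνsupp t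
  unfold sizeBiased
  rw [lintegral_map hf hm, lintegral_congr_ae hae,
    lintegral_prod_mul hf.aemeasurable hf.aemeasurable,
    ENNReal.mul_inv (Or.inl hμpos.ne') (Or.inl hμfin.ne),
    ← map_withDensity_comp hm hf, withDensity_congr_ae hae, ← prod_withDensity hf hf,
    Measure.prod_smul_left, Measure.prod_smul_right, smul_smul, Measure.map_smul]
end
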